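/- Let R be the quotient of ℂ⟨e1,e2,e3⟩ by the two-sided ideal generated by e1e2 − e2e1, e1e3 − e3e1, e2e3 − e3e2, e2², and 2e3² − e1. Then h_0 = 1 and h_n = 2 for every n ≥ 1; equivalently, the Poincaré series Σ_{n≥0} h_n z^n equals (1+z)/(1−z). -/

import Mathlib

open CategoryTheory FreeAlgebra

/-- `Ext^m_R(ℂ,ℂ)` as a ℂ-module, where `ℂ` is an `R`-module via the augmentation `ε`. -/
noncomputable def extC (R : Type) [Ring R] [Algebra ℂ R] (ε : R →ₐ[ℂ] ℂ) (m : ℕ) :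
    ModuleCat ℂ :=
  letI : Module R ℂ := Module.compHom ℂ ε.toRingHom
  ((Ext ℂ (ModuleCat R) m).obj (Opposite.op (ModuleCat.of R ℂ))).obj (ModuleCat.of R ℂ)

/-- `h_m = dim_ℂ Ext^m_R(ℂ,ℂ)`. -/
noncomputable def extDim (R : Type) [Ring R] [Algebra ℂ R] (ε : R →ₐ[ℂ] ℂ) (m : ℕ) : ℕ :=
  Module.finrank ℂ (extC R ε m)

/-- Relations: `e1e2 - e2e1 = 0`, `e1e3 - e3e1 = 0`, `e2e3 - e3e2 = 0`, `e2² = 0`, `2e3² = e1`. -/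
inductive CRel : FreeAlgebra ℂ (Fin 3) → FreeAlgebra ℂ (Fin 3) → Prop
  | r12 : CRel (ι ℂ 0 * ι ℂ 1 - ι ℂ 1 * ι ℂ 0) 0
  | r13 : CRel (ι ℂ 0 * ι ℂ 2 - ι ℂ 2 * ι ℂ 0) 0
  | r23 : CRel (ι ℂ 1 * ι ℂ 2 - ι ℂ 2 * ι ℂ 1) 0
  | r22 : CRel (ι ℂ 1 * ι ℂ 1) 0
  | r33 : CRel ((2 : ℂ) • (ι ℂ 2 * ι ℂ 2)) (ι ℂ 0)


namespace Betti

open Polynomial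

noncomputable abbrev e (i : Fin 3) : RingQuot CRel := RingQuot.mkAlgHom ℂ CRel (ι ℂ i)

lemma e01 : e 0 * e 1 = e 1 * e 0 := by
  have h := RingQuot.mkAlgHom_rel ℂ CRel.r12
  simpa [sub_eq_zero] using h

lemma e12 : e 1 * e 2 = e 2 * e 1 := by
  have h := RingQuot.mkAlgHom_rel ℂ CRel.r23
  simpa [sub_eq_zero] using h

lemma e11 : e 1 * e 1 = 0 := by
  have h := RingQuot.mkAlgHom_rel ℂ CRel.r22
  simpa using h

lemma e22 : e 0 = (2 : ℂ) • (e 2 * e 2) := by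
  have h := RingQuot.mkAlgHom_rel ℂ CRel.r33
  simpa using h.symm

/-- normal form map -/
noncomputable def nf (p q : ℂ[X]) : RingQuot CRel := aeval (e 2) p + aeval (e 2) q * e 1

lemma comm1 (p : ℂ[X]) : e 1 * aeval (e 2) p = aeval (e 2) p * e 1 := by
  have h : Commute (e 1) (e 2) := e12
  induction p using Polynomial.induction_on' with
  | add p q hp hq => simp only [map_add, mul_add, add_mul, hp, hq]
  | monomial n a =>
    rw [aeval_monomial]
    have h2 : Commute (e 1) (algebraMap ℂ (RingQuot CRel) a) := (Algebra.commutes a (e 1)).symm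
    exact h2.mul_right (h.pow_right n)

lemma nf_mul (p q p' q' : ℂ[X]) : nf p q * nf p' q' = nf (p * p') (p * q' + q * p') := by
  simp only [nf, map_mul, map_add]
  have h1 := comm1 p'
  have h2 := comm1 q'
  have h3 := e11
  generalize aeval (e 2) p' = P' at *
  generalize aeval (e 2) q' = Q' at *
  generalize aeval (e 2) p = P at *
  generalize aeval (e 2) q = Q at *
  have h4 : (Q * e 1) * (Q' * e 1) = 0 := by
    rw [mul_assoc, ← mul_assoc (e 1), h2, mul_assoc Q', h3]; simp
  have h5 : (Q * e 1) * P' = Q * P' * e 1 := by rw [mul_assoc, h1, mul_assoc]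
  rw [add_mul, mul_add, mul_add, h4, h5]
  simp only [add_mul, mul_assoc, add_zero, add_assoc]

lemma exists_nf (x : RingQuot CRel) : ∃ p q, x = nf p q := by
  obtain ⟨x, rfl⟩ := RingQuot.mkAlgHom_surjective ℂ CRel x
  induction x using FreeAlgebra.induction with
  | grade0 r => exact ⟨C r, 0, by simp [nf]⟩
  | grade1 i =>
    fin_cases i
    · exact ⟨C 2 * (X * X), 0, by simpa [nf, Algebra.smul_def] using e22⟩
    · exact ⟨0, 1, by simp [nf]⟩
    · exact ⟨X, 0, by simp [nf]⟩
  | mul a b ha hb =>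
    obtain ⟨p, q, h⟩ := ha
    obtain ⟨p', q', h'⟩ := hb
    exact ⟨_, _, by rw [map_mul, h, h', nf_mul]⟩
  | add a b ha hb =>
    obtain ⟨p, q, h⟩ := ha
    obtain ⟨p', q', h'⟩ := hb
    exact ⟨p + p', q + q', by rw [map_add, h, h']; simp only [nf, map_add, add_mul]; abel⟩

noncomputable def gen : Fin 3 → DualNumber ℂ[X] :=
  ![TrivSqZeroExt.inl (C 2 * (X * X)), DualNumber.eps, TrivSqZeroExt.inl X]

noncomputable def toDual : RingQuot CRel →ₐ[ℂ] DualNumber ℂ[X] :=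
  RingQuot.liftAlgHom ℂ ⟨FreeAlgebra.lift ℂ gen, by
    intro a b h
    cases h
    · simp [gen, mul_comm]
    · simp [gen, mul_comm]
    · simp [gen, mul_comm]
    · simp [gen]
    · ext <;> simp [gen, smul_eq_C_mul]⟩

lemma toDual_e (i : Fin 3) : toDual (e i) = gen i := by
  simp [toDual, e]

lemma toDual_aeval (p : ℂ[X]) : toDual (aeval (e 2) p) = TrivSqZeroExt.inl p := by
  rw [← aeval_algHom_apply, toDual_e]
  have : gen 2 = TrivSqZeroExt.inlAlgHom ℂ ℂ[X] ℂ[X] X := rfl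
  rw [this, aeval_algHom_apply]
  simp

lemma toDual_nf (p q : ℂ[X]) : toDual (nf p q) = TrivSqZeroExt.inl p + TrivSqZeroExt.inr q := by
  rw [nf, map_add, map_mul, toDual_aeval, toDual_aeval, toDual_e]
  ext <;> simp [gen]

lemma nf_inj {p q p' q' : ℂ[X]} (h : nf p q = nf p' q') : p = p' ∧ q = q' := by
  have := congrArg toDual h
  rw [toDual_nf, toDual_nf] at this
  exact ⟨by simpa using congrArg TrivSqZeroExt.fst this,
    by simpa using congrArg TrivSqZeroExt.snd this⟩

lemma e1_nf : e 1 = nf 0 1 := by simp [nf]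
lemma e2_nf : e 2 = nf X 0 := by simp [nf]
lemma zero_nf : (0 : RingQuot CRel) = nf 0 0 := by simp [nf]

lemma fact_t (x : RingQuot CRel) (h : x * e 2 = 0) : x = 0 := by
  obtain ⟨p, q, rfl⟩ := exists_nf x
  rw [e2_nf, nf_mul, zero_nf] at h
  obtain ⟨h1, h2⟩ := nf_inj h
  have h1 : p = 0 := by simpa using h1
  have h2 : q = 0 := by simpa using h2
  rw [h1, h2, ← zero_nf]

lemma fact_y (x : RingQuot CRel) (h : x * e 1 = 0) : ∃ z, x = z * e 1 := by
  obtain ⟨p, q, rfl⟩ := exists_nf x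
  rw [e1_nf, nf_mul, zero_nf] at h
  obtain ⟨h1, h2⟩ := nf_inj h
  have h2 : p = 0 := by simpa using h2
  exact ⟨aeval (e 2) q, by rw [h2, nf]; simp⟩

lemma fact_aug (ε : RingQuot CRel →ₐ[ℂ] ℂ) (hε : ∀ i : Fin 3, ε (e i) = 0)
    (x : RingQuot CRel) (h : ε x = 0) : ∃ u v, x = u * e 1 + v * e 2 := by
  obtain ⟨p, q, rfl⟩ := exists_nf x
  have : p.eval 0 = 0 := by
    rw [nf, map_add, map_mul, hε, ← aeval_algHom_apply, hε] at h
    simpa [coe_aeval_eq_eval] using h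
  rw [← coeff_zero_eq_eval_zero, ← X_dvd_iff] at this
  obtain ⟨r, rfl⟩ := this
  refine ⟨aeval (e 2) q, aeval (e 2) r, ?_⟩
  rw [nf, mul_comm X, map_mul, aeval_X, add_comm]

end Betti

namespace Betti
open Limits

section
variable {R : Type} [Ring R]

def dOne (y t : R) : (R × R) →ₗ[R] R where
  toFun w := w.1 * y + w.2 * t
  map_add' a b := by simp only [Prod.fst_add, Prod.snd_add, add_mul]; abel
  map_smul' a b := by simp [mul_add, mul_assoc]

def dTwo (y t : R) : (R × R) →ₗ[R] (R × R) where
  toFun w := (w.1 * y + w.2 * t, -(w.2 * y))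
  map_add' a b := by
    ext
    · simp only [Prod.fst_add, Prod.snd_add, add_mul]; abel
    · simp only [Prod.snd_add, add_mul]; abel
  map_smul' a b := by ext <;> simp [mul_add, mul_assoc]

variable (R) in
def cX : ℕ → ModuleCat.{0} R
  | 0 => ModuleCat.of R R
  | _ + 1 => ModuleCat.of R (R × R)

def cd (y t : R) : ∀ n, cX R (n + 1) ⟶ cX R n
  | 0 => ModuleCat.ofHom (dOne y t)
  | _ + 1 => ModuleCat.ofHom (dTwo y t)

lemma cd_sq (y t : R) (hyy : y * y = 0) (hyt : y * t = t * y) (n : ℕ) :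
    cd y t (n + 1) ≫ cd y t n = 0 := by
  have key (u v : R) : (u * y + v * t) * y + -(v * y) * t = 0 := by
    rw [add_mul, mul_assoc u, hyy, mul_assoc v t, ← hyt]; simp [mul_assoc]
  have key2 (v : R) : v * y * y = 0 := by rw [mul_assoc, hyy, mul_zero]
  cases n with
  | zero =>
    refine ModuleCat.hom_ext (LinearMap.ext fun w => ?_)
    exact key w.1 w.2
  | succ n =>
    refine ModuleCat.hom_ext (LinearMap.ext fun w => ?_)
    refine Prod.ext (key w.1 w.2) ?_
    change -(-(w.2 * y) * y) = 0
    rw [neg_mul, neg_neg, key2]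

noncomputable def cC (y t : R) (hyy : y * y = 0) (hyt : y * t = t * y) :
    ChainComplex (ModuleCat.{0} R) ℕ :=
  ChainComplex.of (cX R) (cd y t) (cd_sq y t hyy hyt)

lemma cC_d (y t : R) (hyy : y * y = 0) (hyt : y * t = t * y) (n : ℕ) :
    (cC y t hyy hyt).d (n + 1) n = cd y t n := by
  simp [cC]

lemma exact_cd (y t : R) (hyy : y * y = 0) (hyt : y * t = t * y)
    (ht : ∀ x : R, x * t = 0 → x = 0) (hy : ∀ x : R, x * y = 0 → ∃ z, x = z * y) (n : ℕ) :
    (ShortComplex.mk (cd y t (n + 1)) (cd y t n) (cd_sq y t hyy hyt n)).Exact := by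
  have key (u v : R) (h : u * y + v * t = 0) : ∃ w, dTwo y t w = (u, v) := by
    have h1 : v * y = 0 := by
      apply ht
      have := congrArg (· * y) h
      simp only [add_mul, mul_assoc, hyy, ← hyt, mul_zero, zero_add, zero_mul] at this
      rw [mul_assoc, this]
    obtain ⟨z, rfl⟩ := hy v h1
    obtain ⟨z', h2⟩ := hy (u + z * t) (by rw [add_mul, mul_assoc z, ← hyt, ← mul_assoc, h])
    refine ⟨(z', -z), ?_⟩
    refine Prod.ext ?_ ?_
    · change z' * y + -z * t = u
      rw [← h2]; simp
    · change -(-z * y) = z * y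
      simp
  rw [ShortComplex.moduleCat_exact_iff]
  cases n with
  | zero =>
    intro x hx
    exact key x.1 x.2 hx
  | succ n =>
    intro x hx
    exact key x.1 x.2 (congrArg Prod.fst hx)

end

section
variable {R : Type} [Ring R] [Algebra ℂ R] (ε : R →ₐ[ℂ] ℂ)

abbrev augMod : Module R ℂ := Module.compHom ℂ ε.toRingHom

noncomputable def augObj : ModuleCat.{0} R := @ModuleCat.of R _ ℂ _ (augMod ε)

def augVal : augObj ε ≃+ ℂ := AddEquiv.refl ℂ

lemma augVal_smul (r : R) (x : augObj ε) : augVal ε (r • x) = ε r * augVal ε x := rfl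

noncomputable def augLin : R →ₗ[R] augObj ε where
  toFun := fun r => (augVal ε).symm (ε r)
  map_add' := fun a b => by simp
  map_smul' := fun a b => (augVal ε).injective (by
    rw [RingHom.id_apply, augVal_smul]
    simp)

noncomputable def mkHom {A : Type} [AddCommGroup A] [Module R A] (M : ModuleCat.{0} R)
    (f : A →ₗ[R] M) : ModuleCat.of R A ⟶ M := ModuleCat.ofHom f

noncomputable def augMap : cX R 0 ⟶ augObj ε := mkHom (augObj ε) (augLin ε)

lemma augMap_apply (x : R) : augVal ε ((augMap ε).hom x) = ε x := rfl

section res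

variable (y t : R) (hyy : y * y = 0) (hyt : y * t = t * y)
    (ht : ∀ x : R, x * t = 0 → x = 0) (hy : ∀ x : R, x * y = 0 → ∃ z, x = z * y)
    (hεy : ε y = 0) (hεt : ε t = 0) (haug : ∀ x, ε x = 0 → ∃ u v, x = u * y + v * t)

include hεy hεt in
lemma comp_zero_of (n : ℕ) (f : cX R n ⟶ augObj ε) : cd y t n ≫ f = 0 := by
  refine ModuleCat.hom_ext (LinearMap.ext fun w => (augVal ε).injective ?_)
  cases n with
  | zero =>
    let g : R →ₗ[R] augObj ε := f.hom
    let w' : R × R := w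
    change augVal ε (g (w'.1 * y + w'.2 * t)) = 0
    have : g (w'.1 * y + w'.2 * t) = (w'.1 * y + w'.2 * t) • g 1 := by
      rw [← map_smul]; simp
    rw [this, augVal_smul]
    simp [hεy, hεt]
  | succ n =>
    let g : (R × R) →ₗ[R] augObj ε := f.hom
    let w' : R × R := w
    change augVal ε (g (w'.1 * y + w'.2 * t, -(w'.2 * y))) = 0
    have : g (w'.1 * y + w'.2 * t, -(w'.2 * y)) =
        (w'.1 * y + w'.2 * t) • g (1, 0) + (-(w'.2 * y)) • g (0, 1) := by
      rw [← map_smul, ← map_smul, ← map_add]; simp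
    rw [this, map_add, augVal_smul, augVal_smul]
    simp [hεy, hεt]

lemma proj_cX (n : ℕ) : Projective (cX R n) := by
  cases n with
  | zero => exact (IsProjective.iff_projective (R := R) R).1 inferInstance
  | succ n => exact (IsProjective.iff_projective (R := R) (R × R)).1 inferInstance

include hyy hyt ht hy haug hεy hεt in
lemma exists_res : ∃ P : ProjectiveResolution (augObj ε),
    P.complex = cC y t hyy hyt := by
  have h0 : (cC y t hyy hyt).d 1 0 ≫ augMap ε = 0 := by
    rw [cC_d]
    exact comp_zero_of ε y t hεy hεt 0 _
  have hπ : (((cC y t hyy hyt).toSingle₀Equiv (augObj ε)).symm ⟨augMap ε, h0⟩).f 0 = augMap ε :=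
    ChainComplex.toSingle₀Equiv_symm_apply_f_zero _ _
  refine ⟨{ complex := cC y t hyy hyt
            projective := fun n => proj_cX n
            π := ((cC y t hyy hyt).toSingle₀Equiv (augObj ε)).symm ⟨augMap ε, h0⟩
            quasiIso := ⟨fun n => ?_⟩ }, rfl⟩
  cases n with
  | zero =>
    rw [ChainComplex.quasiIsoAt₀_iff, ShortComplex.quasiIso_iff_of_zeros' _ (by simp; rfl)
      (by simp; rfl) (by simp; rfl)]
    constructor
    · rw [ShortComplex.moduleCat_exact_iff]
      intro x hx
      let x' : R := x
      have hx' : ε x' = 0 := by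
        have h1 : augVal ε ((augMap ε).hom x') = 0 := by
          rw [← map_zero (augVal ε)]
          refine congrArg (augVal ε) (Eq.trans ?_ hx)
          exact (congrArg (fun k => k.hom x') hπ).symm
        exact h1
      obtain ⟨u, v, h⟩ := haug x' hx'
      refine ⟨((u, v) : R × R), ?_⟩
      have h2 : (cd y t 0).hom ((u, v) : R × R) = x' := h.symm
      rw [← cC_d y t hyy hyt] at h2
      exact h2
    · rw [ModuleCat.epi_iff_surjective]
      intro z
      refine ⟨algebraMap ℂ R (augVal ε z), ?_⟩
      refine Eq.trans (congrArg (fun k => k.hom (algebraMap ℂ R (augVal ε z) : R)) hπ) ?_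
      refine (augVal ε).injective ?_
      change ε (algebraMap ℂ R (augVal ε z)) = augVal ε z
      simp
  | succ m =>
    rw [quasiIsoAt_iff_exactAt' (hL := ChainComplex.exactAt_succ_single_obj ..),
          HomologicalComplex.exactAt_iff' _ (m + 2) (m + 1) m (by simp) (by simp)]
    have := exact_cd y t hyy hyt ht hy m
    have e := cC_d y t hyy hyt (m + 1)
    have e' := cC_d y t hyy hyt m
    rw [ShortComplex.moduleCat_exact_iff] at this ⊢
    intro x hx
    change (((cC y t hyy hyt).d (m + 1) m).hom x = 0) at hx
    rw [e'] at hx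
    obtain ⟨w, hw⟩ := this x hx
    refine ⟨w, ?_⟩
    change ((cC y t hyy hyt).d (m + 1 + 1) (m + 1)).hom w = x
    rw [e]
    exact hw

end res

noncomputable def homZero : (cX R 0 ⟶ augObj ε) ≃ₗ[ℂ] ℂ where
  toFun f := augVal ε (f.hom (1 : R))
  map_add' f g := rfl
  map_smul' c f := by
    change augVal ε (algebraMap ℂ R c • f.hom (1 : R)) = _
    rw [augVal_smul]; simp
  invFun z := mkHom (A := R) (augObj ε) (LinearMap.toSpanSingleton R (augObj ε) ((augVal ε).symm z))
  left_inv f := by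
    refine ModuleCat.hom_ext (LinearMap.ext fun w => ?_)
    let g : R →ₗ[R] augObj ε := f.hom
    let w' : R := w
    change w' • g 1 = g w'
    rw [← map_smul]; simp
  right_inv z := by
    change augVal ε ((1 : R) • (augVal ε).symm z) = z
    simp

noncomputable def homSucc (n : ℕ) : (cX R (n + 1) ⟶ augObj ε) ≃ₗ[ℂ] ℂ × ℂ where
  toFun f := (augVal ε (f.hom ((1, 0) : R × R)), augVal ε (f.hom ((0, 1) : R × R)))
  map_add' f g := rfl
  map_smul' c f := by
    change (augVal ε (algebraMap ℂ R c • f.hom ((1, 0) : R × R)),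
      augVal ε (algebraMap ℂ R c • f.hom ((0, 1) : R × R))) = _
    rw [augVal_smul, augVal_smul]; simp
  invFun z := mkHom (A := R × R) (augObj ε) (LinearMap.coprod
    (LinearMap.toSpanSingleton R (augObj ε) ((augVal ε).symm z.1))
    (LinearMap.toSpanSingleton R (augObj ε) ((augVal ε).symm z.2)))
  left_inv f := by
    refine ModuleCat.hom_ext (LinearMap.ext fun w => ?_)
    let g : (R × R) →ₗ[R] augObj ε := f.hom
    let w' : R × R := w
    change w'.1 • g (1, 0) + w'.2 • g (0, 1) = g w'
    rw [← map_smul, ← map_smul, ← map_add]; simp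
  right_inv z := by
    change (augVal ε ((1 : R) • (augVal ε).symm z.1 + (0 : R) • (augVal ε).symm z.2),
      augVal ε ((0 : R) • (augVal ε).symm z.1 + (1 : R) • (augVal ε).symm z.2)) = z
    simp

variable (y t : R) (hyy : y * y = 0) (hyt : y * t = t * y)
    (ht : ∀ x : R, x * t = 0 → x = 0) (hy : ∀ x : R, x * y = 0 → ∃ z, x = z * y)
    (hεy : ε y = 0) (hεt : ε t = 0) (haug : ∀ x, ε x = 0 → ∃ u v, x = u * y + v * t)

include hyy hyt ht hy haug hεy hεt in
lemma extDim_eq (n : ℕ) :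
    extDim R ε n = Module.finrank ℂ (cX R n ⟶ augObj ε) := by
  obtain ⟨P, hP⟩ := exists_res ε y t hyy hyt ht hy hεy hεt haug
  have i1 : extC R ε n ≅ (P.complex.linearYonedaObj ℂ (augObj ε)).homology n :=
    P.isoExt n (augObj ε)
  rw [hP] at i1
  set K := (cC y t hyy hyt).linearYonedaObj ℂ (augObj ε) with hK
  have hd (i : ℕ) : K.d i (i + 1) = 0 := by
    refine ModuleCat.hom_ext (LinearMap.ext fun f => ?_)
    have := comp_zero_of ε y t hεy hεt i f
    rw [← cC_d y t hyy hyt] at this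
    exact this
  have hd' (i j : ℕ) : K.d i j = 0 := by
    by_cases h : i + 1 = j
    · subst h; exact hd i
    · exact K.shape _ _ h
  have i2 : K.homology n ≅ K.X n :=
    (ShortComplex.HomologyData.ofZeros (K.sc n) (hd' _ _) (hd' _ _)).left.homologyIso
  have i3 : extC R ε n ≃ₗ[ℂ] (cX R n ⟶ augObj ε) := (i1 ≪≫ i2).toLinearEquiv
  exact i3.finrank_eq

end
end Betti

theorem betti_numbers (ε : RingQuot CRel →ₐ[ℂ] ℂ)
    (hε : ∀ i : Fin 3, ε (RingQuot.mkAlgHom ℂ CRel (ι ℂ i)) = 0) :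
    (extDim (RingQuot CRel) ε 0 = 1 ∧ ∀ n ≥ 1, extDim (RingQuot CRel) ε n = 2) ∧
    (PowerSeries.mk fun n => (extDim (RingQuot CRel) ε n : ℚ)) * (1 - PowerSeries.X) =
      1 + PowerSeries.X := by
  have key (n : ℕ) := Betti.extDim_eq ε (Betti.e 1) (Betti.e 2) Betti.e11 Betti.e12
    Betti.fact_t Betti.fact_y (hε 1) (hε 2) (Betti.fact_aug ε hε) n
  have h0 : extDim (RingQuot CRel) ε 0 = 1 := by
    rw [key, (Betti.homZero ε).finrank_eq]; simp
  have h1 (n : ℕ) : extDim (RingQuot CRel) ε (n + 1) = 2 := by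
    rw [key, (Betti.homSucc ε n).finrank_eq]; simp
  refine ⟨⟨h0, fun n hn => ?_⟩, ?_⟩
  · obtain ⟨m, rfl⟩ := Nat.exists_eq_add_of_le' hn
    exact h1 m
  · ext n
    rw [mul_sub, mul_one, map_sub]
    rcases n with _ | _ | n
    · simp [h0]
    · rw [PowerSeries.coeff_succ_mul_X]
      simp [h0, h1, PowerSeries.coeff_one, PowerSeries.coeff_X]
      norm_num
    · rw [PowerSeries.coeff_succ_mul_X]
      simp [h1, PowerSeries.coeff_one, PowerSeries.coeff_X]
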